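/- Let K be a field and F = (f_1,f_2) in K[x,y] of total degree at most d ≥ 1, generating an ideal I with finitely many common zeros over an algebraic closure of K. Then Δ(F) ≤ 2d′² + d′, where d′ = max(d,3). -/

import Mathlib

noncomputable section

open Polynomial

/-- Bivariate polynomials `k[x][y]`: the inner `X` is `x`, the outer `X` is `y`. -/
abbrev Biv (k : Type*) [CommRing k] : Type _ := Polynomial (Polynomial k)

variable {k : Type*} [CommRing k]

/-- The leading monomial of `f`, as the pair (y-exponent, x-exponent), for the
lexicographic order induced by `x ≺ y`. -/
def lmon (f : Biv k) : ℕ × ℕ := (f.natDegree, f.leadingCoeff.natDegree)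

/-- Divisibility of monomials: `x^{p.2} y^{p.1}` divides `x^{q.2} y^{q.1}`. -/
def monDvd (p q : ℕ × ℕ) : Prop := p.1 ≤ q.1 ∧ p.2 ≤ q.2

/-- Lexicographic comparison of monomials, `y`-exponent first. -/
def monLt (p q : ℕ × ℕ) : Prop := p.1 < q.1 ∨ (p.1 = q.1 ∧ p.2 < q.2)

/-- The monomial `x^{m.2} y^{m.1}` occurs in `f` (has a nonzero coefficient). -/
def occursIn (f : Biv k) (m : ℕ × ℕ) : Prop := (f.coeff m.1).coeff m.2 ≠ 0

/-- `G` is a Gröbner basis of `I` for the lexicographic order with `x ≺ y`: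
its elements are nonzero elements of `I`, and the leading monomial of any nonzero
element of `I` is divisible by the leading monomial of some element of `G`. -/
def IsGB (G : List (Biv k)) (I : Ideal (Biv k)) : Prop :=
  (∀ g ∈ G, g ≠ 0 ∧ g ∈ I) ∧
  ∀ f ∈ I, f ≠ 0 → ∃ g ∈ G, monDvd (lmon g) (lmon f)

/-- `f` is monic w.r.t. lex `x ≺ y`: the coefficient of its leading monomial is `1`. -/
def lexMonic (f : Biv k) : Prop := f.leadingCoeff.Monic

/-- `g 0, …, g s` is the reduced minimal lexicographic Gröbner basis of `I`,
listed in decreasing order of leading monomials. -/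
def IsReducedGB {s : ℕ} (g : Fin (s + 1) → Biv k) (I : Ideal (Biv k)) : Prop :=
  IsGB (List.ofFn g) I ∧
  (∀ j, lexMonic (g j)) ∧
  (∀ j l, j ≠ l → ∀ m : ℕ × ℕ, occursIn (g j) m → ¬ monDvd (lmon (g l)) m) ∧
  (∀ j l : Fin (s + 1), j < l → monLt (lmon (g l)) (lmon (g j)))

/-- Every monomial of `f` of `y`-degree `< i` is reduced w.r.t. the family `g`. -/
def reducedBelow {s : ℕ} (g : Fin (s + 1) → Biv k) (i : ℕ) (f : Biv k) : Prop :=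
  ∀ m : ℕ × ℕ, m.1 < i → occursIn f m → ∀ j, ¬ monDvd (lmon (g j)) m

/-- `A` is the detaching sequence associated to the reduced Gröbner basis `g` of `I`:
`A i = 0` for `i < n_s`, `A (n_j) = g j`, and otherwise `A i` is obtained from
`y * A (i-1)` by reducing the terms of `y`-degree `< i` modulo `g`
(so `A i - y * A (i-1)` lies in `I` and has `y`-degree `< i`, and the part of `A i`
of `y`-degree `< i` is reduced w.r.t. `g`). -/
def IsDetachingSeq {s : ℕ} (g : Fin (s + 1) → Biv k) (I : Ideal (Biv k))
    (A : ℕ → Biv k) : Prop :=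
  (∀ i, i < (g (Fin.last s)).natDegree → A i = 0) ∧
  (∀ j, A ((g j).natDegree) = g j) ∧
  (∀ i, (g (Fin.last s)).natDegree ≤ i → (∀ j, (g j).natDegree ≠ i) →
    (A i - Polynomial.X * A (i - 1)) ∈ I ∧
    (A i - Polynomial.X * A (i - 1)).degree < (i : WithBot ℕ) ∧
    reducedBelow g i (A i))

/-- The total degree of a bivariate polynomial `f ∈ k[x][y]`. -/
def totDeg {k : Type*} [CommRing k] (f : Biv k) : ℕ :=
  f.support.sup fun j => j + (f.coeff j).natDegree

/-- Evaluation of `f ∈ K[x][y]` at a point `(a, b)` of the algebraic closure of `K`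
(`a` is the value of `x`, `b` the value of `y`). -/
def aEval {K : Type*} [Field K] (a b : AlgebraicClosure K) (f : Biv K) :
    AlgebraicClosure K :=
  Polynomial.eval₂
    (Polynomial.eval₂RingHom (algebraMap K (AlgebraicClosure K)) a) b f

/-!
Let `F`, `G` generate the ideal, with `F` of degree `d` and `G` of degree at most `d`. Over the
algebraic closure there is a line `x = a y + c` that carries no common zero and on which `F` keeps
its degree; let `ℓ` be its equation. Restricting relations `u F + v G = 0` to the line shows that
they are all multiples of the trivial one, by a polynomial of the expected degree. Hence the space
`E n` of combinations with cofactors of degree `< n` has codimension `d²` in the polynomials of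
degree `< n + d`, for all `n ≥ d`.

This codimension is used twice. Since `ℓ P ∈ E (m + 1)` implies `P ∈ E m`, an element `P` of the
ideal with `P ∈ E (m + 1)` and `P ∉ E m` gives polynomials `P, ℓ P, ℓ² P, …` which are independent
modulo `E m`; so few of them can have degree `< m + d`, and `P` of degree `< n + d` must lie in
`E (n + d²)`. Moreover there are at most `d²` standard monomials, which bounds the total degree of
every `A i` by `d²`. The cofactors obtained have total degree at most `2 d² - d`, and a `K`-linear
retraction of the algebraic closure onto `K` brings them back to `K`.
-/

section LinearAlgebra

variable {K V W : Type*} [DivisionRing K] [AddCommGroup V] [Module K V] [AddCommGroup W]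
  [Module K W]

lemma finrank_map_add_finrank_inf_ker (p : Submodule K V) [FiniteDimensional K p] (f : V →ₗ[K] W) :
    Module.finrank K (p.map f) + Module.finrank K (p ⊓ LinearMap.ker f : Submodule K V) =
      Module.finrank K p := by
  rw [← LinearMap.finrank_range_add_finrank_ker (f.domRestrict p), LinearMap.range_domRestrict,
    LinearMap.ker_domRestrict, ← Submodule.map_comap_subtype,
    ← (Submodule.equivMapOfInjective p.subtype p.subtype_injective _).finrank_eq]

instance finiteDimensional_submodule_prod (p : Submodule K V) (q : Submodule K W)
    [FiniteDimensional K p] [FiniteDimensional K q] : FiniteDimensional K (p.prod q) :=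
  Module.Finite.iff_fg.2 ((Module.Finite.iff_fg.1 ‹_›).prod (Module.Finite.iff_fg.1 ‹_›))

lemma finrank_submodule_prod (p : Submodule K V) (q : Submodule K W) [FiniteDimensional K p]
    [FiniteDimensional K q] :
    Module.finrank K (p.prod q) = Module.finrank K p + Module.finrank K q := by
  have hrange : LinearMap.range (p.subtype.prodMap q.subtype) = p.prod q := by
    rw [LinearMap.range_prodMap, Submodule.range_subtype, Submodule.range_subtype]
  rw [← Module.finrank_prod, ← hrange, LinearMap.finrank_range_of_inj
    (p.subtype_injective.prodMap q.subtype_injective)]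

lemma linearIndependent_of_flag
    (U : ℕ → Submodule K V) (v : ℕ → V) (hmem : ∀ i j, i < j → v i ∈ U j) (hnot : ∀ j, v j ∉ U j)
    (n : ℕ) : LinearIndependent K fun i : Fin n => v i := by
  induction n with
  | zero => exact linearIndependent_empty_type
  | succ n ih =>
    refine linearIndependent_finSucc'.2 ⟨ih, fun hspan => hnot n (Submodule.span_le.2 ?_ hspan)⟩
    rintro _ ⟨i, rfl⟩
    exact hmem i n i.2

end LinearAlgebra

open Finset.HasAntidiagonal (antidiagonal mem_antidiagonal)

/-! ### Monomials and total degree -/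

/-- The monomial basis of `k[x][y]`; as for `lmon`, the index `m` stands for `x^{m.2} y^{m.1}`. -/
def bivBasis (k : Type*) [CommRing k] : Module.Basis (ℕ × ℕ) k (Biv k) :=
  (basisMonomials k).smulTower' (basisMonomials k[X])

lemma bivBasis_apply (m : ℕ × ℕ) : bivBasis k m = C (X ^ m.2) * X ^ m.1 := by
  rw [bivBasis, Module.Basis.smulTower'_apply]
  simp [← C_mul_X_pow_eq_monomial, smul_eq_C_mul]

lemma bivBasis_repr (f : Biv k) (m : ℕ × ℕ) :
    (bivBasis k).repr f m = (f.coeff m.1).coeff m.2 := by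
  rw [bivBasis, Module.Basis.smulTower'_repr]
  rfl

/-- The bivariate polynomials of total degree less than `n`, the analogue of
`Polynomial.degreeLT`. -/
def totDegLT (k : Type*) [CommRing k] (n : ℕ) : Submodule k (Biv k) :=
  Submodule.span k (bivBasis k '' {m | m.1 + m.2 < n})

lemma mem_totDegLT {n : ℕ} {f : Biv k} :
    f ∈ totDegLT k n ↔ ∀ i j, n ≤ i + j → (f.coeff i).coeff j = 0 := by
  simp only [totDegLT, Module.Basis.mem_span_image, Set.subset_def, Finset.mem_coe,
    Finsupp.mem_support_iff, bivBasis_repr, Prod.forall, Set.mem_ofPred_eq, ← not_le]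
  exact forall₂_congr fun i j => not_imp_not

lemma totDegLT_mono {m n : ℕ} (h : m ≤ n) : totDegLT k m ≤ totDegLT k n :=
  Submodule.span_mono (Set.image_mono fun _ hm => lt_of_lt_of_le hm h)

lemma eq_zero_of_mem_totDegLT_zero {f : Biv k} (hf : f ∈ totDegLT k 0) : f = 0 := by
  simpa [totDegLT] using hf

lemma bivBasis_mem_totDegLT {n : ℕ} {m : ℕ × ℕ} (h : m.1 + m.2 < n) :
    bivBasis k m ∈ totDegLT k n :=
  Submodule.subset_span (Set.mem_image_of_mem _ h)

lemma X_mem_totDegLT : (X : Biv k) ∈ totDegLT k 2 := by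
  simpa [bivBasis_apply] using bivBasis_mem_totDegLT (k := k) (m := (1, 0)) one_lt_two

lemma C_X_mem_totDegLT : (C X : Biv k) ∈ totDegLT k 2 := by
  simpa [bivBasis_apply] using bivBasis_mem_totDegLT (k := k) (m := (0, 1)) one_lt_two

lemma mul_mem_totDegLT {m n : ℕ} {f g : Biv k} (hf : f ∈ totDegLT k m)
    (hg : g ∈ totDegLT k (n + 1)) : f * g ∈ totDegLT k (m + n) := by
  rw [mem_totDegLT] at *
  intro i j h
  rw [coeff_mul, finsetSum_coeff]
  refine Finset.sum_eq_zero fun p hp => ?_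
  rw [coeff_mul]
  refine Finset.sum_eq_zero fun q hq => ?_
  rw [mem_antidiagonal] at hp hq
  by_cases hm : m ≤ p.1 + q.1
  · rw [hf _ _ hm, zero_mul]
  · rw [hg p.2 q.2 (by omega), mul_zero]

-- The truncation `m - d = 0` for `m < d` is harmless: then `f = 0`.
lemma mul_mem_totDegLT_of_sub {m d : ℕ} {f g : Biv k} (hf : f ∈ totDegLT k (m - d))
    (hg : g ∈ totDegLT k (d + 1)) : f * g ∈ totDegLT k m := by
  rcases le_total d m with h | h
  · simpa [h] using mul_mem_totDegLT hf hg
  · rw [Nat.sub_eq_zero_of_le h] at hf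
    simp [eq_zero_of_mem_totDegLT_zero hf]

lemma totDeg_le_iff_mem_totDegLT {f : Biv k} {n : ℕ} :
    totDeg f ≤ n ↔ f ∈ totDegLT k (n + 1) := by
  rw [totDeg, Finset.sup_le_iff, mem_totDegLT]
  constructor
  · intro h i j hij
    by_cases hi : i ∈ f.support
    · exact coeff_eq_zero_of_natDegree_lt (by have := h i hi; omega)
    · simp [notMem_support_iff.mp hi]
  · intro h i hi
    have hlead : (f.coeff i).coeff (f.coeff i).natDegree ≠ 0 := by
      simpa using mem_support_iff.mp hi
    by_contra hlt
    exact hlead (h i _ (by omega))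

lemma exists_mem_totDegLT (f : Biv k) : ∃ n, f ∈ totDegLT k n :=
  ⟨totDeg f + 1, totDeg_le_iff_mem_totDegLT.1 le_rfl⟩

lemma degree_lt_of_totDeg_lt {n : ℕ} {f : Biv k} (hf : totDeg f < n) : f.degree < n := by
  rw [degree_lt_iff_coeff_zero]
  intro i hi
  by_contra hne
  have : i + (f.coeff i).natDegree ≤ totDeg f :=
    Finset.le_sup (f := fun j => j + (f.coeff j).natDegree) (mem_support_iff.2 hne)
  omega

lemma finite_add_lt (n : ℕ) : {m : ℕ × ℕ | m.1 + m.2 < n}.Finite :=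
  ((Set.finite_Iio n).prod (Set.finite_Iio n)).subset fun m (hm : m.1 + m.2 < n) =>
    ⟨show m.1 < n by omega, show m.2 < n by omega⟩

lemma two_mul_ncard_add_lt (n : ℕ) : 2 * {m : ℕ × ℕ | m.1 + m.2 < n}.ncard = n * (n + 1) := by
  induction n with
  | zero => simp
  | succ n ih =>
    have hunion : {m : ℕ × ℕ | m.1 + m.2 < n + 1} =
        {m | m.1 + m.2 < n} ∪ antidiagonal n := by
      ext m
      simp [Nat.le_iff_lt_or_eq]
    have hdisj : Disjoint {m : ℕ × ℕ | m.1 + m.2 < n}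
        (antidiagonal n : Finset (ℕ × ℕ)) := by
      rw [Set.disjoint_left]
      intro m hm hm'
      simp only [Set.mem_ofPred_eq, Finset.mem_coe, mem_antidiagonal] at *
      omega
    rw [hunion, Set.ncard_union_eq hdisj (finite_add_lt n), Set.ncard_coe_finset,
      Finset.Nat.card_antidiagonal]
    linarith

instance totDegLT.finite (n : ℕ) : Module.Finite k (totDegLT k n) :=
  Module.Finite.span_of_finite k ((finite_add_lt n).image _)

lemma two_mul_finrank_totDegLT [Nontrivial k] (n : ℕ) :
    2 * Module.finrank k (totDegLT k n) = n * (n + 1) := by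
  have : Fintype {m : ℕ × ℕ | m.1 + m.2 < n} := (finite_add_lt n).fintype
  have hli : LinearIndependent k fun m : {m : ℕ × ℕ | m.1 + m.2 < n} => bivBasis k m :=
    (bivBasis k).linearIndependent.comp _ Subtype.val_injective
  rw [totDegLT, Set.image_eq_range, finrank_span_eq_card hli, ← Nat.card_eq_fintype_card,
    Nat.card_coe_set_eq, two_mul_ncard_add_lt]

/-! ### Restriction to a line -/

/-- A polynomial in one variable, regarded as a polynomial in `y` alone. -/
def inY (k : Type*) [CommRing k] : k[X] →ₐ[k] Biv k :=
  mapAlgHom (Algebra.ofId k k[X])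

/-- Restriction of a bivariate polynomial to the line `x = a y + c`, parametrized by `y`. -/
def lineRestrict (a c : k) : Biv k →ₐ[k] k[X] :=
  aevalAeval (C a * X + C c) X

/-- The equation `x - (a y + c)` of the line `x = a y + c`. -/
def lineEq (a c : k) : Biv k :=
  C X - inY k (C a * X + C c)

lemma inY_mem_totDegLT {n : ℕ} {q : k[X]} (hq : q ∈ degreeLT k n) : inY k q ∈ totDegLT k n := by
  rw [mem_totDegLT]
  intro i j h
  have hcoeff : (inY k q).coeff i = C (q.coeff i) := by
    simp [inY, mapAlgHom]
  rw [hcoeff, coeff_C]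
  split_ifs with hj
  · exact coeff_eq_zero_of_degree_lt ((mem_degreeLT.1 hq).trans_le (by exact_mod_cast hj ▸ h))
  · rfl

lemma lineRestrict_inY (a c : k) (q : k[X]) : lineRestrict a c (inY k q) = q := by
  have h : (lineRestrict a c).comp (inY k) = AlgHom.id k k[X] := by
    ext
    simp [lineRestrict, inY]
  exact DFunLike.congr_fun h q

lemma lineRestrict_C_X (a c : k) : lineRestrict a c (C X) = C a * X + C c := by
  simp [lineRestrict]

lemma lineRestrict_X (a c : k) : lineRestrict a c X = X := by
  simp [lineRestrict]

lemma lineRestrict_lineEq (a c : k) : lineRestrict a c (lineEq a c) = 0 := by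
  rw [lineEq, map_sub, lineRestrict_inY, lineRestrict_C_X, sub_self]

lemma lineEq_mem_totDegLT (a c : k) : lineEq a c ∈ totDegLT k 2 :=
  sub_mem C_X_mem_totDegLT
    (inY_mem_totDegLT (mem_degreeLT.2 (degree_linear_le.trans_lt (by norm_num))))

lemma lineEq_ne_zero [Nontrivial k] (a c : k) : lineEq a c ≠ 0 := by
  intro h
  have := congrArg (fun f => (f.coeff 0).coeff 1) h
  simp [lineEq, inY] at this

lemma lineEq_pow_mul_mem_totDegLT (a c : k) {n : ℕ} {f : Biv k} (hf : f ∈ totDegLT k n) (r : ℕ) :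
    lineEq a c ^ r * f ∈ totDegLT k (n + r) := by
  induction r with
  | zero => simpa using hf
  | succ r ih =>
    rw [pow_succ', mul_assoc, mul_comm, ← add_assoc]
    exact mul_mem_totDegLT ih (lineEq_mem_totDegLT a c)

lemma lineRestrict_bivBasis (a c : k) (m : ℕ × ℕ) :
    lineRestrict a c (bivBasis k m) = (C a * X + C c) ^ m.2 * X ^ m.1 := by
  rw [bivBasis_apply, map_mul, C_pow, map_pow, map_pow, lineRestrict_C_X, lineRestrict_X]

lemma degree_lineRestrict_bivBasis_le (a c : k) (m : ℕ × ℕ) :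
    (lineRestrict a c (bivBasis k m)).degree ≤ (m.1 + m.2 : ℕ) := by
  rw [lineRestrict_bivBasis]
  have hlin : ((C a * X + C c) ^ m.2).natDegree ≤ m.2 := by
    simpa using natDegree_pow_le_of_le m.2 (natDegree_linear_le (a := a) (b := c))
  refine natDegree_le_iff_degree_le.1 ?_
  rw [add_comm m.1]
  exact natDegree_mul_le_of_le hlin (natDegree_X_pow_le _)

lemma coeff_lineRestrict_bivBasis (a c : k) (m : ℕ × ℕ) :
    (lineRestrict a c (bivBasis k m)).coeff (m.1 + m.2) = a ^ m.2 := by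
  rw [lineRestrict_bivBasis, add_comm m.1, coeff_mul_X_pow]
  simpa using coeff_pow_of_natDegree_le (m := m.2) (natDegree_linear_le (a := a) (b := c))

lemma lineRestrict_mem_degreeLT (a c : k) {n : ℕ} {f : Biv k} (hf : f ∈ totDegLT k n) :
    lineRestrict a c f ∈ degreeLT k n := by
  suffices totDegLT k n ≤ (degreeLT k n).comap (lineRestrict a c).toLinearMap from this hf
  rw [totDegLT, Submodule.span_le]
  rintro _ ⟨m, hm, rfl⟩
  rw [SetLike.mem_coe, Submodule.mem_comap, AlgHom.toLinearMap_apply, mem_degreeLT]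
  exact (degree_lineRestrict_bivBasis_le a c m).trans_lt (by exact_mod_cast hm)

lemma exists_eq_C_add_X_mul_add_C_X_mul {n : ℕ} {f : Biv k} (hf : f ∈ totDegLT k (n + 1)) :
    ∃ (e : k), ∃ f₁ ∈ totDegLT k n, ∃ f₂ ∈ totDegLT k n,
      f = C (C e) + X * f₁ + C X * f₂ := by
  rw [mem_totDegLT] at hf
  refine ⟨(f.coeff 0).coeff 0, divX f, mem_totDegLT.2 fun i j h => ?_,
    C (divX (f.coeff 0)), mem_totDegLT.2 fun i j h => ?_, ?_⟩
  · rw [coeff_divX]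
    exact hf _ _ (by omega)
  · rcases eq_or_ne i 0 with rfl | hi
    · rw [coeff_C_zero, coeff_divX]
      exact hf _ _ (by omega)
    · simp [coeff_C_of_ne_zero hi]
  · conv_lhs => rw [← X_mul_divX_add f, ← X_mul_divX_add (f.coeff 0)]
    simp only [map_add, map_mul]
    ring

lemma exists_eq_inY_lineRestrict_add_lineEq_mul (a c : k) {n : ℕ} {f : Biv k}
    (hf : f ∈ totDegLT k (n + 1)) :
    ∃ h ∈ totDegLT k n, f = inY k (lineRestrict a c f) + lineEq a c * h := by
  induction n generalizing f with
  | zero =>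
    obtain ⟨e, f₁, hf₁, f₂, hf₂, rfl⟩ := exists_eq_C_add_X_mul_add_C_X_mul hf
    refine ⟨0, zero_mem _, ?_⟩
    simp [eq_zero_of_mem_totDegLT_zero hf₁, eq_zero_of_mem_totDegLT_zero hf₂, lineRestrict, inY]
  | succ n ih =>
    obtain ⟨e, f₁, hf₁, f₂, hf₂, rfl⟩ := exists_eq_C_add_X_mul_add_C_X_mul hf
    obtain ⟨h₁, hh₁, e₁⟩ := ih hf₁
    obtain ⟨h₂, hh₂, e₂⟩ := ih hf₂
    refine ⟨h₁ * X + inY k (lineRestrict a c f₂) + h₂ * C X, ?_, ?_⟩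
    · exact add_mem (add_mem (mul_mem_totDegLT hh₁ X_mem_totDegLT)
        (inY_mem_totDegLT (lineRestrict_mem_degreeLT a c hf₂)))
        (mul_mem_totDegLT hh₂ C_X_mem_totDegLT)
    · have hX : inY k X = X := by simp [inY]
      have hC : inY k (lineRestrict a c (C (C e))) = C (C e) := by simp [inY, lineRestrict]
      have hCX : C X = inY k (C a * X + C c) + lineEq a c := by rw [lineEq]; ring
      simp only [map_add, map_mul, hC, lineRestrict_X, hX, lineRestrict_C_X] at hCX ⊢
      linear_combination X * e₁ + C X * e₂ + inY k (lineRestrict a c f₂) * hCX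

lemma exists_eq_lineEq_mul {a c : k} {n : ℕ} {f : Biv k} (hf : f ∈ totDegLT k (n + 1))
    (h0 : lineRestrict a c f = 0) : ∃ h ∈ totDegLT k n, f = lineEq a c * h := by
  simpa [h0] using exists_eq_inY_lineRestrict_add_lineEq_mul a c hf

/-- The form of degree `d` of a bivariate polynomial, dehomogenized at `y = 1`. -/
def topForm (d : ℕ) (f : Biv k) : k[X] :=
  ∑ p ∈ antidiagonal d, monomial p.2 ((f.coeff p.1).coeff p.2)

lemma coeff_topForm {d i j : ℕ} (h : i + j = d) (f : Biv k) :
    (topForm d f).coeff j = (f.coeff i).coeff j := by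
  rw [topForm, finsetSum_coeff, Finset.sum_eq_single_of_mem (i, j) (mem_antidiagonal.2 h)]
  · exact coeff_monomial_same j _
  · rintro p hp hne
    rw [mem_antidiagonal] at hp
    refine coeff_monomial_of_ne _ fun hj => hne (Prod.ext ?_ hj.symm)
    dsimp only
    omega

lemma topForm_bivBasis (m : ℕ × ℕ) : topForm (m.1 + m.2) (bivBasis k m) = X ^ m.2 := by
  rw [topForm, Finset.sum_eq_single_of_mem m (mem_antidiagonal.2 rfl)]
  · rw [← bivBasis_repr, Module.Basis.repr_self, Finsupp.single_eq_same,
      monomial_one_right_eq_X_pow]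
  · intro p _ hne
    rw [← bivBasis_repr, Module.Basis.repr_self, Finsupp.single_eq_of_ne hne, map_zero]

lemma topForm_eq_zero {d : ℕ} {f : Biv k} (hf : f ∈ totDegLT k d) : topForm d f = 0 :=
  Finset.sum_eq_zero fun p hp => by
    rw [mem_totDegLT.1 hf p.1 p.2 (mem_antidiagonal.1 hp).ge, map_zero]

lemma coeff_lineRestrict (a c : k) {d : ℕ} {f : Biv k} (hf : f ∈ totDegLT k (d + 1)) :
    (lineRestrict a c f).coeff d = (topForm d f).eval a := by
  induction hf using Submodule.span_induction with
  | mem f hf =>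
    obtain ⟨m, hm, rfl⟩ := hf
    rcases (Nat.lt_succ_iff.1 hm).lt_or_eq with hlt | rfl
    · rw [topForm_eq_zero (bivBasis_mem_totDegLT hlt), eval_zero]
      exact coeff_eq_zero_of_degree_lt
        ((degree_lineRestrict_bivBasis_le a c m).trans_lt (by exact_mod_cast hlt))
    · rw [topForm_bivBasis, coeff_lineRestrict_bivBasis, eval_pow, eval_X]
  | zero => simp [topForm]
  | add f g _ _ ihf ihg => simp [ihf, ihg, topForm, Finset.sum_add_distrib]
  | smul r f _ ih => simp [ih, topForm, Finset.mul_sum, mul_assoc, eval_finsetSum]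

lemma exists_forall_coeff_lineRestrict_ne_zero [IsDomain k] [Infinite k] {d : ℕ} {f : Biv k}
    (hf : f ∈ totDegLT k (d + 1)) (hfd : f ∉ totDegLT k d) :
    ∃ a : k, ∀ c, (lineRestrict a c f).coeff d ≠ 0 := by
  have htop : topForm d f ≠ 0 := by
    contrapose! hfd
    refine mem_totDegLT.2 fun i j hij => ?_
    rcases hij.lt_or_eq with hlt | heq
    · exact mem_totDegLT.1 hf i j hlt
    · rw [← coeff_topForm heq.symm, hfd, coeff_zero]
  obtain ⟨a, ha⟩ : ∃ a, (topForm d f).eval a ≠ 0 := by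
    by_contra! h
    exact htop (zero_of_eval_zero _ h)
  exact ⟨a, fun c => by rwa [coeff_lineRestrict a c hf]⟩

/-! ### Combinations with cofactors of bounded degree -/

/-- The combinations `u F + v G` with cofactors `u`, `v` of total degree less than `n`. -/
def combLT (F G : Biv k) (n : ℕ) : Submodule k (Biv k) :=
  (totDegLT k n).map (LinearMap.mulRight k F) ⊔ (totDegLT k n).map (LinearMap.mulRight k G)

lemma mem_combLT {F G P : Biv k} {n : ℕ} :
    P ∈ combLT F G n ↔ ∃ u ∈ totDegLT k n, ∃ v ∈ totDegLT k n, P = u * F + v * G := by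
  simp [combLT, Submodule.mem_sup, eq_comm]

lemma combLT_comm (F G : Biv k) (n : ℕ) : combLT F G n = combLT G F n :=
  sup_comm _ _

lemma combLT_mono (F G : Biv k) : Monotone (combLT F G) := fun _ _ h =>
  sup_le_sup (Submodule.map_mono (totDegLT_mono h)) (Submodule.map_mono (totDegLT_mono h))

lemma lineEq_pow_mul_mem_combLT (a c : k) {F G P : Biv k} {n : ℕ} (hP : P ∈ combLT F G n)
    (r : ℕ) : lineEq a c ^ r * P ∈ combLT F G (n + r) := by
  obtain ⟨u, hu, v, hv, rfl⟩ := mem_combLT.1 hP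
  exact mem_combLT.2 ⟨_, lineEq_pow_mul_mem_totDegLT a c hu r,
    _, lineEq_pow_mul_mem_totDegLT a c hv r, by ring⟩

lemma combLT_le_span_pair (F G : Biv k) (n : ℕ) :
    combLT F G n ≤ (Ideal.span {F, G}).restrictScalars k := by
  intro P hP
  obtain ⟨u, -, v, -, rfl⟩ := mem_combLT.1 hP
  exact Ideal.mem_span_pair.2 ⟨u, v, rfl⟩

lemma exists_mem_combLT_of_mem_span_pair {F G P : Biv k} (hP : P ∈ Ideal.span {F, G}) :
    ∃ n, P ∈ combLT F G n := by
  obtain ⟨u, v, rfl⟩ := Ideal.mem_span_pair.1 hP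
  obtain ⟨m, hu⟩ := exists_mem_totDegLT u
  obtain ⟨n, hv⟩ := exists_mem_totDegLT v
  exact ⟨max m n, mem_combLT.2 ⟨u, totDegLT_mono (le_max_left m n) hu,
    v, totDegLT_mono (le_max_right m n) hv, rfl⟩⟩

lemma combLT_le_totDegLT {F G : Biv k} {d : ℕ} (hF : F ∈ totDegLT k (d + 1))
    (hG : G ∈ totDegLT k (d + 1)) (n : ℕ) : combLT F G n ≤ totDegLT k (n + d) := by
  intro P hP
  obtain ⟨u, hu, v, hv, rfl⟩ := mem_combLT.1 hP
  exact add_mem (mul_mem_totDegLT hu hF) (mul_mem_totDegLT hv hG)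

/-- The line `x = a y + c` is generic for polynomials `F`, `G` of total degree at most `d`: it
carries no common zero of them, and `F` has no zero at infinity on it. -/
structure IsGenericLine (F G : Biv k) (d : ℕ) (a c : k) : Prop where
  left_mem : F ∈ totDegLT k (d + 1)
  right_mem : G ∈ totDegLT k (d + 1)
  coeff_ne_zero : (lineRestrict a c F).coeff d ≠ 0
  isCoprime : IsCoprime (lineRestrict a c F) (lineRestrict a c G)

/-- `F` and `G` have total degree at most `d`, and every relation `u F + v G = 0` is a multiple of
the trivial one `-G F + F G = 0`, by a polynomial of the expected degree. -/
structure IsKoszulPair (F G : Biv k) (d : ℕ) : Prop where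
  left_mem : F ∈ totDegLT k (d + 1)
  right_mem : G ∈ totDegLT k (d + 1)
  left_ne_zero : F ≠ 0
  exists_eq_mul : ∀ ⦃n : ℕ⦄ ⦃u : Biv k⦄, u ∈ totDegLT k n → ∀ ⦃v : Biv k⦄, v ∈ totDegLT k n →
    u * F + v * G = 0 → ∃ q ∈ totDegLT k (n - d), u = -(q * G) ∧ v = q * F

lemma mem_degreeLT_sub_of_mul_mem [IsDomain k] {n d : ℕ} {p q : k[X]} (hp : p.coeff d ≠ 0)
    (h : p * q ∈ degreeLT k n) : q ∈ degreeLT k (n - d) := by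
  rcases eq_or_ne q 0 with rfl | hq
  · exact zero_mem _
  have hp0 : p ≠ 0 := by
    rintro rfl
    exact hp (coeff_zero d)
  have hd : d ≤ p.natDegree := le_natDegree_of_ne_zero hp
  rw [mem_degreeLT, ← natDegree_lt_iff_degree_lt (by simp [hp0, hq]),
    natDegree_mul hp0 hq] at h
  rw [mem_degreeLT, ← natDegree_lt_iff_degree_lt hq]
  omega

namespace IsGenericLine

variable [IsDomain k] {F G : Biv k} {d : ℕ} {a c : k}

lemma exists_eq_add_lineEq_mul (h : IsGenericLine F G d a c) {n : ℕ} {u v : Biv k}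
    (hu : u ∈ totDegLT k (n + 1)) (hv : v ∈ totDegLT k (n + 1))
    (huv : lineRestrict a c (u * F + v * G) = 0) :
    ∃ q ∈ totDegLT k (n + 1 - d), ∃ u' ∈ totDegLT k n, ∃ v' ∈ totDegLT k n,
      u = -(q * G) + lineEq a c * u' ∧ v = q * F + lineEq a c * v' := by
  rw [map_add, map_mul, map_mul] at huv
  obtain ⟨q, hq⟩ : lineRestrict a c F ∣ lineRestrict a c v := by
    refine h.isCoprime.dvd_of_dvd_mul_right ⟨-lineRestrict a c u, ?_⟩
    linear_combination huv
  have hF0 : lineRestrict a c F ≠ 0 := fun h0 => h.coeff_ne_zero (by rw [h0, coeff_zero])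
  have hqu : lineRestrict a c u = -(q * lineRestrict a c G) := by
    apply mul_right_cancel₀ hF0
    linear_combination huv - lineRestrict a c G * hq
  have hqd : inY k q ∈ totDegLT k (n + 1 - d) := inY_mem_totDegLT
    (mem_degreeLT_sub_of_mul_mem h.coeff_ne_zero (hq ▸ lineRestrict_mem_degreeLT a c hv))
  obtain ⟨u', hu', eu⟩ := exists_eq_lineEq_mul (a := a) (c := c)
    (add_mem hu (mul_mem_totDegLT_of_sub hqd h.right_mem))
    (by rw [map_add, map_mul, lineRestrict_inY, hqu, neg_add_cancel])
  obtain ⟨v', hv', ev⟩ := exists_eq_lineEq_mul (a := a) (c := c)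
    (sub_mem hv (mul_mem_totDegLT_of_sub hqd h.left_mem))
    (by rw [map_sub, map_mul, lineRestrict_inY, hq, mul_comm, sub_self])
  exact ⟨inY k q, hqd, u', hu', v', hv', by linear_combination eu, by linear_combination ev⟩

lemma mem_combLT_of_lineEq_mul_mem (h : IsGenericLine F G d a c) {n : ℕ} {P : Biv k}
    (hP : lineEq a c * P ∈ combLT F G (n + 1)) : P ∈ combLT F G n := by
  obtain ⟨u, hu, v, hv, huv⟩ := mem_combLT.1 hP
  obtain ⟨q, -, u', hu', v', hv', rfl, rfl⟩ := h.exists_eq_add_lineEq_mul hu hv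
    (by rw [← huv, map_mul, lineRestrict_lineEq, zero_mul])
  refine mem_combLT.2 ⟨u', hu', v', hv', mul_left_cancel₀ (lineEq_ne_zero a c) ?_⟩
  linear_combination huv

lemma mem_combLT_of_lineEq_pow_mul_mem (h : IsGenericLine F G d a c) {n r : ℕ} {P : Biv k}
    (hP : lineEq a c ^ r * P ∈ combLT F G (n + r)) : P ∈ combLT F G n := by
  induction r with
  | zero => simpa using hP
  | succ r ih =>
    rw [pow_succ', mul_assoc, ← add_assoc] at hP
    exact ih (h.mem_combLT_of_lineEq_mul_mem hP)

lemma isKoszulPair (h : IsGenericLine F G d a c) : IsKoszulPair F G d where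
  left_mem := h.left_mem
  right_mem := h.right_mem
  left_ne_zero := by
    rintro rfl
    exact h.coeff_ne_zero (by rw [map_zero, coeff_zero])
  exists_eq_mul n := by
    induction n with
    | zero =>
      intro u hu v hv _
      exact ⟨0, zero_mem _, by simp [eq_zero_of_mem_totDegLT_zero hu],
        by simp [eq_zero_of_mem_totDegLT_zero hv]⟩
    | succ n ih =>
      intro u hu v hv huv
      obtain ⟨q, hq, u', hu', v', hv', rfl, rfl⟩ :=
        h.exists_eq_add_lineEq_mul hu hv (by rw [huv, map_zero])
      obtain ⟨q', hq', rfl, rfl⟩ := ih hu' hv' <| by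
        refine (mul_eq_zero.1 ?_).resolve_left (lineEq_ne_zero a c)
        linear_combination huv
      have hmul : lineEq a c * q' ∈ totDegLT k (n + 1 - d) := by
        rcases lt_or_ge n d with hn | hn
        · rw [Nat.sub_eq_zero_of_le hn.le] at hq'
          simp [eq_zero_of_mem_totDegLT_zero hq']
        · rw [Nat.sub_add_comm hn]
          simpa using lineEq_pow_mul_mem_totDegLT a c hq' 1
      exact ⟨q + lineEq a c * q', add_mem hq hmul, by ring, by ring⟩

end IsGenericLine

namespace IsKoszulPair

variable {K : Type*} [Field K] {F G : Biv K} {d : ℕ}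

lemma map_koszul_eq (h : IsKoszulPair F G d) (n : ℕ) :
    (totDegLT K (n - d)).map ((LinearMap.mulRight K (-G)).prod (LinearMap.mulRight K F)) =
      (totDegLT K n).prod (totDegLT K n) ⊓
        LinearMap.ker ((LinearMap.mulRight K F).coprod (LinearMap.mulRight K G)) := by
  ext ⟨u, v⟩
  constructor
  · rintro ⟨q, hq, huv⟩
    obtain ⟨rfl, rfl⟩ : q * -G = u ∧ q * F = v := Prod.ext_iff.1 huv
    refine ⟨⟨mul_mem_totDegLT_of_sub hq (neg_mem h.right_mem),
      mul_mem_totDegLT_of_sub hq h.left_mem⟩, ?_⟩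
    change q * -G * F + q * F * G = 0
    ring
  · rintro ⟨⟨hu, hv⟩, huv⟩
    obtain ⟨q, hq, rfl, rfl⟩ := h.exists_eq_mul hu hv huv
    exact ⟨q, hq, Prod.ext (mul_neg q G) rfl⟩

lemma finrank_combLT_add (h : IsKoszulPair F G d) (n : ℕ) :
    Module.finrank K (combLT F G n) + Module.finrank K (totDegLT K (n - d)) =
      2 * Module.finrank K (totDegLT K n) := by
  have hinj : Function.Injective ((LinearMap.mulRight K (-G)).prod (LinearMap.mulRight K F)) :=
    fun q q' hq => mul_right_cancel₀ h.left_ne_zero (congrArg Prod.snd hq)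
  rw [(Submodule.equivMapOfInjective _ hinj (totDegLT K (n - d))).finrank_eq, h.map_koszul_eq,
    combLT, ← LinearMap.map_coprod_prod, finrank_map_add_finrank_inf_ker, finrank_submodule_prod,
    two_mul]

lemma finrank_map_mkQ (h : IsKoszulPair F G d) {n : ℕ} (hn : d ≤ n) :
    Module.finrank K ((totDegLT K (n + d)).map (combLT F G n).mkQ) = d ^ 2 := by
  have hrank := finrank_map_add_finrank_inf_ker (totDegLT K (n + d)) (combLT F G n).mkQ
  rw [Submodule.ker_mkQ, inf_eq_right.2 (combLT_le_totDegLT h.left_mem h.right_mem n)] at hrank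
  have hcomb := h.finrank_combLT_add n
  have h₁ := two_mul_finrank_totDegLT (k := K) (n + d)
  have h₂ := two_mul_finrank_totDegLT (k := K) n
  have h₃ := two_mul_finrank_totDegLT (k := K) (n - d)
  obtain ⟨m, rfl⟩ := Nat.exists_eq_add_of_le' hn
  rw [Nat.add_sub_cancel] at hcomb h₃
  nlinarith

lemma card_le (h : IsKoszulPair F G d) {n : ℕ} (hn : d ≤ n) {ι : Type*} [Fintype ι]
    {v : ι → Biv K} (hv : ∀ i, v i ∈ totDegLT K (n + d))
    (hli : LinearIndependent K ((combLT F G n).mkQ ∘ v)) : Fintype.card ι ≤ d ^ 2 := by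
  rw [← finrank_span_eq_card hli, ← h.finrank_map_mkQ hn]
  refine Submodule.finrank_mono (Submodule.span_le.2 ?_)
  rintro _ ⟨i, rfl⟩
  exact Submodule.mem_map_of_mem (hv i)

end IsKoszulPair

namespace IsGenericLine

variable {K : Type*} [Field K] {F G : Biv K} {d : ℕ} {a c : K}

-- The multiples of `P` by the powers of `lineEq a c` climb the flag `combLT F G (m + j)`.
lemma linearIndependent_mkQ_lineEq_pow_mul (h : IsGenericLine F G d a c) {m : ℕ} {P : Biv K}
    (hP : P ∉ combLT F G m) (hP' : P ∈ combLT F G (m + 1)) (n : ℕ) :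
    LinearIndependent K
      ((combLT F G m).mkQ ∘ fun i : Fin n => lineEq a c ^ (i : ℕ) * P) := by
  have hmem (Q : Biv K) (j : ℕ) : (combLT F G m).mkQ Q ∈
      (combLT F G (m + j)).map (combLT F G m).mkQ ↔ Q ∈ combLT F G (m + j) := by
    rw [← Submodule.mem_comap, Submodule.comap_map_mkQ,
      sup_eq_right.2 (combLT_mono F G (Nat.le_add_right m j))]
  refine linearIndependent_of_flag (fun j => (combLT F G (m + j)).map (combLT F G m).mkQ)
    (fun j => (combLT F G m).mkQ (lineEq a c ^ j * P)) (fun i j hij => ?_) (fun j hj => ?_) n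
  · rw [hmem]
    exact combLT_mono F G (by omega) (lineEq_pow_mul_mem_combLT a c hP' i)
  · rw [hmem] at hj
    exact hP (h.mem_combLT_of_lineEq_pow_mul_mem hj)

theorem mem_combLT_add_sq (h : IsGenericLine F G d a c) {n : ℕ} {P : Biv K}
    (hP : P ∈ totDegLT K (n + d)) (hspan : P ∈ Ideal.span {F, G}) :
    P ∈ combLT F G (n + d ^ 2) := by
  have hex : ∃ e, P ∈ combLT F G (n + e) := by
    obtain ⟨e, he⟩ := exists_mem_combLT_of_mem_span_pair hspan
    exact ⟨e, combLT_mono F G (Nat.le_add_left e n) he⟩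
  classical
  by_contra hnot
  obtain ⟨e, he⟩ : ∃ e, Nat.find hex = e + 1 := by
    refine Nat.exists_eq_succ_of_ne_zero fun h0 => hnot ?_
    exact combLT_mono F G (by omega) (Nat.find_spec hex)
  have hde : d ^ 2 ≤ e := by
    by_contra! hlt
    exact hnot (combLT_mono F G (by omega) (Nat.find_spec hex))
  have hli := h.linearIndependent_mkQ_lineEq_pow_mul (Nat.find_min hex (by omega : e < _))
    (by rw [add_assoc, ← he]; exact Nat.find_spec hex) (e + 1)
  have hdeg (i : Fin (e + 1)) : lineEq a c ^ (i : ℕ) * P ∈ totDegLT K (n + e + d) :=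
    totDegLT_mono (by omega) (lineEq_pow_mul_mem_totDegLT a c hP i)
  have hd : d ≤ d ^ 2 := Nat.le_self_pow two_ne_zero d
  have hcard := h.isKoszulPair.card_le (by omega) hdeg hli
  rw [Fintype.card_fin] at hcard
  omega

end IsGenericLine

/-! ### Extension of scalars -/

section BaseChange

variable {K L : Type*} [CommRing K] [CommRing L] [Algebra K L]

/-- Extension of scalars of bivariate polynomials along `K → L`. -/
def baseChange (K L : Type*) [CommRing K] [CommRing L] [Algebra K L] : Biv K →+* Biv L :=
  mapRingHom (mapRingHom (algebraMap K L))

/-- Coefficientwise application of a `K`-linear map `ρ : L → K`. When `ρ 1 = 1` this is a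
left inverse of `baseChange K L`, linear over `Biv K`. -/
def coeffRetract (ρ : L →ₗ[K] K) : Biv L →+ Biv K :=
  (bivBasis K).repr.symm.toAddEquiv.toAddMonoidHom.comp
    ((Finsupp.mapRange.addMonoidHom ρ.toAddMonoidHom).comp
      (bivBasis L).repr.toAddEquiv.toAddMonoidHom)

lemma coeff_coeff_baseChange (f : Biv K) (i j : ℕ) :
    ((baseChange K L f).coeff i).coeff j = algebraMap K L ((f.coeff i).coeff j) := by
  simp [baseChange]

lemma coeff_coeff_coeffRetract (ρ : L →ₗ[K] K) (w : Biv L) (i j : ℕ) :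
    ((coeffRetract ρ w).coeff i).coeff j = ρ ((w.coeff i).coeff j) := by
  rw [← bivBasis_repr (coeffRetract ρ w) (i, j), ← bivBasis_repr w (i, j)]
  simp [coeffRetract]

lemma baseChange_mem_totDegLT {n : ℕ} {f : Biv K} (hf : f ∈ totDegLT K n) :
    baseChange K L f ∈ totDegLT L n := by
  refine mem_totDegLT.2 fun i j h => ?_
  rw [coeff_coeff_baseChange, mem_totDegLT.1 hf i j h, map_zero]

lemma coeffRetract_mem_totDegLT (ρ : L →ₗ[K] K) {n : ℕ} {w : Biv L} (hw : w ∈ totDegLT L n) :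
    coeffRetract ρ w ∈ totDegLT K n := by
  refine mem_totDegLT.2 fun i j h => ?_
  rw [coeff_coeff_coeffRetract, mem_totDegLT.1 hw i j h, map_zero]

lemma coeffRetract_mul_baseChange (ρ : L →ₗ[K] K) (w : Biv L) (f : Biv K) :
    coeffRetract ρ (w * baseChange K L f) = coeffRetract ρ w * f := by
  have hρ (x : L) (y : K) : ρ (x * algebraMap K L y) = ρ x * y := by
    rw [mul_comm, ← Algebra.smul_def, map_smul, smul_eq_mul, mul_comm]
  ext i j
  simp only [coeff_coeff_coeffRetract, coeff_mul, finsetSum_coeff, map_sum, hρ,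
    coeff_coeff_baseChange]

variable {ρ : L →ₗ[K] K}

lemma coeffRetract_baseChange (hρ : ρ 1 = 1) (f : Biv K) :
    coeffRetract ρ (baseChange K L f) = f := by
  ext i j
  rw [coeff_coeff_coeffRetract, coeff_coeff_baseChange, Algebra.algebraMap_eq_smul_one, map_smul,
    hρ, smul_eq_mul, mul_one]

lemma baseChange_mem_totDegLT_iff (hρ : ρ 1 = 1) {n : ℕ} {f : Biv K} :
    baseChange K L f ∈ totDegLT L n ↔ f ∈ totDegLT K n :=
  ⟨fun h => coeffRetract_baseChange hρ f ▸ coeffRetract_mem_totDegLT ρ h, baseChange_mem_totDegLT⟩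

lemma mem_combLT_of_baseChange_mem (hρ : ρ 1 = 1) {F G P : Biv K} {n : ℕ}
    (hP : baseChange K L P ∈ combLT (baseChange K L F) (baseChange K L G) n) :
    P ∈ combLT F G n := by
  obtain ⟨u, hu, v, hv, huv⟩ := mem_combLT.1 hP
  refine mem_combLT.2 ⟨_, coeffRetract_mem_totDegLT ρ hu, _, coeffRetract_mem_totDegLT ρ hv, ?_⟩
  rw [← coeffRetract_baseChange hρ P, huv, map_add, coeffRetract_mul_baseChange,
    coeffRetract_mul_baseChange]

lemma IsKoszulPair.of_baseChange (hρ : ρ 1 = 1) {F G : Biv K} {d : ℕ}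
    (h : IsKoszulPair (baseChange K L F) (baseChange K L G) d) : IsKoszulPair F G d where
  left_mem := (baseChange_mem_totDegLT_iff hρ).1 h.left_mem
  right_mem := (baseChange_mem_totDegLT_iff hρ).1 h.right_mem
  left_ne_zero := by
    rintro rfl
    exact h.left_ne_zero (map_zero _)
  exists_eq_mul n u hu v hv huv := by
    obtain ⟨q, hq, hqu, hqv⟩ := h.exists_eq_mul (baseChange_mem_totDegLT hu)
      (baseChange_mem_totDegLT hv) (by rw [← map_mul, ← map_mul, ← map_add, huv, map_zero])
    refine ⟨_, coeffRetract_mem_totDegLT ρ hq, ?_, ?_⟩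
    · rw [← coeffRetract_mul_baseChange, ← map_neg, ← hqu, coeffRetract_baseChange hρ]
    · rw [← coeffRetract_mul_baseChange, ← hqv, coeffRetract_baseChange hρ]

end BaseChange

lemma eval_lineRestrict (a c b : k) (f : Biv k) :
    (lineRestrict a c f).eval b = f.evalEval (a * b + c) b := by
  have h : (evalRingHom b).comp (lineRestrict a c : Biv k →+* k[X]) =
      evalEvalRingHom (a * b + c) b := by
    ext <;> simp [lineRestrict]
  exact DFunLike.congr_fun h f

lemma exists_isGenericLine {L : Type*} [Field L] [IsAlgClosed L] {F G : Biv L} {d : ℕ}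
    (hF : F ∈ totDegLT L (d + 1)) (hFd : F ∉ totDegLT L d) (hG : G ∈ totDegLT L (d + 1))
    (hfin : {p : L × L | F.evalEval p.1 p.2 = 0 ∧ G.evalEval p.1 p.2 = 0}.Finite) :
    ∃ a c : L, IsGenericLine F G d a c := by
  have : Infinite L := IsAlgClosed.instInfinite
  obtain ⟨a, ha⟩ := exists_forall_coeff_lineRestrict_ne_zero hF hFd
  obtain ⟨c, hc⟩ := (hfin.image fun p => p.1 - a * p.2).exists_notMem
  refine ⟨a, c, hF, hG, ha c, (isCoprime_iff_aeval_ne_zero_of_isAlgClosed L L _ _).2 fun b => ?_⟩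
  rw [coe_aeval_eq_eval, eval_lineRestrict, eval_lineRestrict]
  by_contra! hb
  exact hc ⟨(a * b + c, b), hb, by simp⟩

lemma aEval_eq_evalEval_baseChange {K : Type*} [Field K] (a b : AlgebraicClosure K) (f : Biv K) :
    aEval a b f = (baseChange K (AlgebraicClosure K) f).evalEval a b := by
  rw [aEval, eval₂_eval₂RingHom_apply]
  rfl

/-! ### Standard monomials and the detaching sequence -/

/-- The monomials that are divisible by no leading monomial of the family `g`. -/
def standardMonomials {s : ℕ} (g : Fin (s + 1) → Biv k) : Set (ℕ × ℕ) :=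
  {m | ∀ j, ¬ monDvd (lmon (g j)) m}

lemma mem_standardMonomials_of_monDvd {s : ℕ} {g : Fin (s + 1) → Biv k} {m m' : ℕ × ℕ}
    (hm : m ∈ standardMonomials g) (h : monDvd m' m) : m' ∈ standardMonomials g :=
  fun j hj => hm j ⟨hj.1.trans h.1, hj.2.trans h.2⟩

lemma add_lt_of_encard_standardMonomials_le {s : ℕ} {g : Fin (s + 1) → Biv k} {B : ℕ}
    (hB : (standardMonomials g).encard ≤ B) {m : ℕ × ℕ} (hm : m ∈ standardMonomials g) :
    m.1 + m.2 < B := by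
  have hsub : ↑(Finset.Iic m.1 ×ˢ Finset.Iic m.2) ⊆ standardMonomials g := by
    intro m' hm'
    simp only [Finset.mem_coe, Finset.mem_product, Finset.mem_Iic] at hm'
    exact mem_standardMonomials_of_monDvd hm hm'
  have hcard := (Set.encard_le_encard hsub).trans hB
  rw [Set.encard_coe_eq_coe_finsetCard, Finset.card_product, Nat.card_Iic, Nat.card_Iic,
    Nat.cast_le] at hcard
  nlinarith

lemma occursIn_lmon {f : Biv k} (hf : f ≠ 0) : occursIn f (lmon f) := by
  simpa [occursIn, lmon] using hf

lemma eq_lmon_of_occursIn_of_monDvd {f : Biv k} {m : ℕ × ℕ} (hm : occursIn f m)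
    (h : monDvd (lmon f) m) : m = lmon f := by
  have hy : m.1 = f.natDegree :=
    le_antisymm (le_natDegree_of_ne_zero fun h0 => hm (by rw [h0, coeff_zero])) h.1
  have hx : m.2 ≤ f.leadingCoeff.natDegree :=
    le_natDegree_of_ne_zero (by rwa [leadingCoeff, ← hy])
  exact Prod.ext hy (le_antisymm hx h.2)

namespace IsReducedGB

variable {s : ℕ} {g : Fin (s + 1) → Biv k} {I : Ideal (Biv k)}

lemma ne_zero (hg : IsReducedGB g I) (j : Fin (s + 1)) : g j ≠ 0 :=
  (hg.1.1 _ (List.mem_ofFn.2 ⟨j, rfl⟩)).1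

lemma mem (hg : IsReducedGB g I) (j : Fin (s + 1)) : g j ∈ I :=
  (hg.1.1 _ (List.mem_ofFn.2 ⟨j, rfl⟩)).2

lemma lmon_notMem_standardMonomials (hg : IsReducedGB g I) {f : Biv k} (hf : f ∈ I)
    (hf0 : f ≠ 0) : lmon f ∉ standardMonomials g := by
  obtain ⟨_, hmem, hdvd⟩ := hg.1.2 f hf hf0
  obtain ⟨j, rfl⟩ := List.mem_ofFn.1 hmem
  exact fun hstd => hstd j hdvd

lemma mem_standardMonomials_of_occursIn (hg : IsReducedGB g I) {j : Fin (s + 1)} {m : ℕ × ℕ}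
    (hm : occursIn (g j) m) (hne : m ≠ lmon (g j)) : m ∈ standardMonomials g := by
  intro l hl
  rcases eq_or_ne j l with rfl | hjl
  · exact hne (eq_lmon_of_occursIn_of_monDvd hm hl)
  · exact hg.2.2.1 j l hjl m hm hl

lemma mem_standardMonomials_of_monDvd_lmon (hg : IsReducedGB g I) {j : Fin (s + 1)} {m : ℕ × ℕ}
    (hm : monDvd m (lmon (g j))) (hne : m ≠ lmon (g j)) : m ∈ standardMonomials g := by
  intro l hl
  rcases eq_or_ne j l with rfl | hjl
  · exact hne (Prod.ext (le_antisymm hm.1 hl.1) (le_antisymm hm.2 hl.2))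
  · exact hg.2.2.1 j l hjl _ (occursIn_lmon (hg.ne_zero j)) ⟨hl.1.trans hm.1, hl.2.trans hm.2⟩

lemma natDegree_le_of_encard_standardMonomials_le (hg : IsReducedGB g I) {B : ℕ}
    (hB : (standardMonomials g).encard ≤ B) (j : Fin (s + 1)) : (g j).natDegree ≤ B := by
  rcases Nat.eq_zero_or_pos (g j).natDegree with h | h
  · omega
  · have hstd : ((g j).natDegree - 1, 0) ∈ standardMonomials g :=
      hg.mem_standardMonomials_of_monDvd_lmon (j := j) ⟨Nat.sub_le _ _, Nat.zero_le _⟩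
        fun heq => (Nat.sub_lt h one_pos).ne (congrArg Prod.fst heq)
    have := add_lt_of_encard_standardMonomials_le hB hstd
    omega

lemma disjoint_span_standardMonomials (hg : IsReducedGB g I) :
    Disjoint (Submodule.span k (bivBasis k '' standardMonomials g)) (I.restrictScalars k) := by
  rw [Submodule.disjoint_def]
  intro f hspan hI
  by_contra hf
  rw [Module.Basis.mem_span_image] at hspan
  refine hg.lmon_notMem_standardMonomials hI hf (hspan ?_)
  rw [Finset.mem_coe, Finsupp.mem_support_iff, bivBasis_repr]
  exact occursIn_lmon hf

end IsReducedGB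

lemma IsKoszulPair.encard_standardMonomials_le {K : Type*} [Field K] {F G : Biv K} {d s : ℕ}
    {g : Fin (s + 1) → Biv K} (h : IsKoszulPair F G d)
    (hg : IsReducedGB g (Ideal.span {F, G})) : (standardMonomials g).encard ≤ (d ^ 2 : ℕ) := by
  by_contra! hlt
  obtain ⟨M, hM, hcard⟩ := Set.exists_subset_encard_eq (Order.add_one_le_of_lt hlt)
  have hfin : M.Finite := Set.finite_of_encard_eq_coe (k := d ^ 2 + 1) (by exact_mod_cast hcard)
  have := hfin.fintype
  obtain ⟨n, hn⟩ := (hfin.image fun m => m.1 + m.2).bddAbove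
  have hdeg (m : M) : bivBasis K m ∈ totDegLT K (n + 1 + d + d) := by
    refine bivBasis_mem_totDegLT ?_
    have : (m : ℕ × ℕ).1 + (m : ℕ × ℕ).2 ≤ n := hn ⟨m, m.2, rfl⟩
    omega
  have hli : LinearIndependent K ((combLT F G (n + 1 + d)).mkQ ∘ fun m : M => bivBasis K m) := by
    refine ((bivBasis K).linearIndependent.comp _ Subtype.val_injective).map ?_
    rw [Submodule.ker_mkQ]
    refine hg.disjoint_span_standardMonomials.mono (Submodule.span_mono ?_)
      (combLT_le_span_pair F G _)
    rintro _ ⟨m, rfl⟩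
    exact ⟨m, hM m.2, rfl⟩
  have hle := h.card_le (Nat.le_add_left d (n + 1)) hdeg hli
  rw [Set.encard_eq_coe_toFinset_card, Set.toFinset_card] at hcard
  norm_cast at hcard
  omega

namespace IsDetachingSeq

variable {s : ℕ} {g : Fin (s + 1) → Biv k} {I : Ideal (Biv k)} {A : ℕ → Biv k}

lemma induction (hA : IsDetachingSeq g I A) {P : ℕ → Biv k → Prop}
    (basis : ∀ j, P (g j).natDegree (g j))
    (step : ∀ i, (∀ j, (g j).natDegree ≠ i + 1) → A (i + 1) - X * A i ∈ I →
      (A (i + 1) - X * A i).degree < ((i + 1 : ℕ) : WithBot ℕ) →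
      reducedBelow g (i + 1) (A (i + 1)) → P i (A i) → P (i + 1) (A (i + 1)))
    {i : ℕ} (hi : (g (Fin.last s)).natDegree ≤ i) : P i (A i) := by
  have hbasis (j : Fin (s + 1)) : P (g j).natDegree (A (g j).natDegree) := by
    rw [hA.2.1 j]
    exact basis j
  induction i, hi using Nat.le_induction with
  | base => exact hbasis _
  | succ i hi ih =>
    by_cases hex : ∃ j, (g j).natDegree = i + 1
    · obtain ⟨j, hj⟩ := hex
      exact hj ▸ hbasis j
    · push Not at hex
      obtain ⟨hmem, hdeg, hred⟩ := hA.2.2 (i + 1) (by omega) hex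
      exact step i hex hmem hdeg hred ih

lemma mem (hA : IsDetachingSeq g I A) (hg : IsReducedGB g I) {i : ℕ}
    (hi : (g (Fin.last s)).natDegree ≤ i) : A i ∈ I :=
  hA.induction (P := fun _ f => f ∈ I) hg.mem
    (fun _ _ hmem _ _ ih => (I.sub_mem_iff_left (I.mul_mem_left X ih)).1 hmem) hi

lemma isReducedBelow (hA : IsDetachingSeq g I A) (hg : IsReducedGB g I) {i : ℕ}
    (hi : (g (Fin.last s)).natDegree ≤ i) : reducedBelow g i (A i) := by
  refine hA.induction (P := reducedBelow g) (fun j m hm hocc => ?_)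
    (fun _ _ _ _ hred _ => hred) hi
  exact hg.mem_standardMonomials_of_occursIn hocc fun heq => hm.ne (congrArg Prod.fst heq)

lemma natDegree_le (hA : IsDetachingSeq g I A) {i : ℕ}
    (hi : (g (Fin.last s)).natDegree ≤ i) : (A i).natDegree ≤ i := by
  refine hA.induction (P := fun i f => f.natDegree ≤ i) (fun _ => le_rfl)
    (fun i _ _ hdeg _ ih => ?_) hi
  have hX : (X * A i).natDegree ≤ i + 1 :=
    natDegree_mul_le.trans (by linarith [natDegree_X_le (R := k[X])])
  rw [← sub_add_cancel (A (i + 1)) (X * A i)]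
  exact (natDegree_add_le _ _).trans (max_le (natDegree_le_of_degree_le hdeg.le) hX)

/- A monomial `y^i x^q` stays standard when `i` increases, until `i` reaches the degree of the next
element of `g`. -/
lemma mk_mem_standardMonomials (hA : IsDetachingSeq g I A) (hg : IsReducedGB g I) {i q : ℕ}
    (hi : (g (Fin.last s)).natDegree ≤ i) (hq : q < ((A i).coeff i).natDegree) :
    (i, q) ∈ standardMonomials g := by
  revert q
  refine hA.induction (P := fun i f => ∀ {q}, q < (f.coeff i).natDegree →
    (i, q) ∈ standardMonomials g) (fun j q hq => ?_) (fun i hne _ hdeg _ ih q hq l hl => ?_) hi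
  · exact hg.mem_standardMonomials_of_monDvd_lmon ⟨le_rfl, hq.le⟩
      fun heq => hq.ne (congrArg Prod.snd heq)
  · have hcoeff : (A (i + 1)).coeff (i + 1) = (A i).coeff i := by
      rw [← coeff_X_mul (A i), ← sub_eq_zero, ← coeff_sub, coeff_eq_zero_of_degree_lt hdeg]
    exact ih (hcoeff ▸ hq) l ⟨Nat.le_of_lt_succ (lt_of_le_of_ne hl.1 (hne l)), hl.2⟩

lemma mem_totDegLT_of_encard_standardMonomials_le (hA : IsDetachingSeq g I A)
    (hg : IsReducedGB g I) {B : ℕ} (hB : (standardMonomials g).encard ≤ B) {i : ℕ}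
    (hi : (g (Fin.last s)).natDegree ≤ i) (hi0 : i ≤ (g 0).natDegree) :
    A i ∈ totDegLT k (B + 1) := by
  rw [mem_totDegLT]
  intro p q hpq
  by_contra hne
  rcases lt_trichotomy p i with h | rfl | h
  · have := add_lt_of_encard_standardMonomials_le hB (hA.isReducedBelow hg hi (p, q) h hne)
    omega
  · have hq : q ≤ ((A p).coeff p).natDegree := le_natDegree_of_ne_zero hne
    rcases q with _ | q
    · have := hg.natDegree_le_of_encard_standardMonomials_le hB 0
      omega
    · have := add_lt_of_encard_standardMonomials_le hB (hA.mk_mem_standardMonomials hg hi hq)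
      omega
  · have := hA.natDegree_le hi
    have hcoeff : (A i).coeff p = 0 := coeff_eq_zero_of_natDegree_lt (by omega)
    exact hne (by rw [hcoeff, coeff_zero])

end IsDetachingSeq

theorem mem_combLT_of_notMem_totDegLT {K : Type*} [Field K] {s d : ℕ} {F G : Biv K}
    (hF : F ∈ totDegLT K (d + 1)) (hFd : F ∉ totDegLT K d) (hG : G ∈ totDegLT K (d + 1))
    (hfin : {p : AlgebraicClosure K × AlgebraicClosure K |
      aEval p.1 p.2 F = 0 ∧ aEval p.1 p.2 G = 0}.Finite)
    {g : Fin (s + 1) → Biv K} (hg : IsReducedGB g (Ideal.span {F, G}))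
    {A : ℕ → Biv K} (hA : IsDetachingSeq g (Ideal.span {F, G}) A) {i : ℕ}
    (hi : (g (Fin.last s)).natDegree ≤ i) (hi0 : i ≤ (g 0).natDegree) :
    A i ∈ combLT F G (2 * d ^ 2 - d + 1) := by
  obtain ⟨ρ, hρ⟩ := LinearMap.exists_leftInverse_of_injective
    (Algebra.linearMap K (AlgebraicClosure K))
    (LinearMap.ker_eq_bot.2 (FaithfulSMul.algebraMap_injective _ _))
  replace hρ : ρ 1 = 1 := by simpa using LinearMap.congr_fun hρ 1
  simp only [aEval_eq_evalEval_baseChange] at hfin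
  obtain ⟨a, c, hline⟩ := exists_isGenericLine (baseChange_mem_totDegLT hF)
    (mt (baseChange_mem_totDegLT_iff hρ).1 hFd) (baseChange_mem_totDegLT hG) hfin
  have hstd := (IsKoszulPair.of_baseChange hρ hline.isKoszulPair).encard_standardMonomials_le hg
  have hdeg := hA.mem_totDegLT_of_encard_standardMonomials_le hg hstd hi hi0
  have hspan := Ideal.mem_map_of_mem (baseChange K (AlgebraicClosure K)) (hA.mem hg hi)
  rw [Ideal.map_span, Set.image_pair] at hspan
  have hd : d ≤ d ^ 2 := Nat.le_self_pow two_ne_zero d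
  have hbound : 2 * d ^ 2 - d + 1 = d ^ 2 - d + 1 + d ^ 2 := by omega
  rw [hbound]
  refine mem_combLT_of_baseChange_mem hρ (hline.mem_combLT_add_sq ?_ hspan)
  exact baseChange_mem_totDegLT (totDegLT_mono (by omega) hdeg)

lemma exists_le_notMem_totDegLT {F G : Biv k} {d : ℕ} (hF : F ∈ totDegLT k (d + 1))
    (hG : G ∈ totDegLT k (d + 1)) (hne : F ≠ 0 ∨ G ≠ 0) :
    ∃ e ≤ d, F ∈ totDegLT k (e + 1) ∧ G ∈ totDegLT k (e + 1) ∧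
      (F ∉ totDegLT k e ∨ G ∉ totDegLT k e) := by
  by_cases h : F ∈ totDegLT k d ∧ G ∈ totDegLT k d
  · induction d with
    | zero => exact absurd hne (by simp [eq_zero_of_mem_totDegLT_zero h.1,
        eq_zero_of_mem_totDegLT_zero h.2])
    | succ d ih =>
      by_cases h' : F ∈ totDegLT k d ∧ G ∈ totDegLT k d
      · obtain ⟨e, he, hrest⟩ := ih h.1 h.2 h'
        exact ⟨e, he.trans d.le_succ, hrest⟩
      · exact ⟨d, d.le_succ, h.1, h.2, not_and_or.1 h'⟩
  · exact ⟨d, le_rfl, hF, hG, not_and_or.1 h⟩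

theorem mem_combLT_of_isDetachingSeq_span_pair {K : Type*} [Field K] {s d : ℕ} {F G : Biv K}
    (hF : F ∈ totDegLT K (d + 1)) (hG : G ∈ totDegLT K (d + 1))
    (hfin : {p : AlgebraicClosure K × AlgebraicClosure K |
      aEval p.1 p.2 F = 0 ∧ aEval p.1 p.2 G = 0}.Finite)
    {g : Fin (s + 1) → Biv K} (hg : IsReducedGB g (Ideal.span {F, G}))
    {A : ℕ → Biv K} (hA : IsDetachingSeq g (Ideal.span {F, G}) A) {i : ℕ}
    (hi : (g (Fin.last s)).natDegree ≤ i) (hi0 : i ≤ (g 0).natDegree) :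
    A i ∈ combLT F G (2 * d ^ 2 - d + 1) := by
  have hne : F ≠ 0 ∨ G ≠ 0 := by
    by_contra! hzero
    exact hg.ne_zero 0 (by simpa [hzero] using hg.mem 0)
  obtain ⟨e, hed, hFe, hGe, hnot⟩ := exists_le_notMem_totDegLT hF hG hne
  have hbound : 2 * e ^ 2 - e + 1 ≤ 2 * d ^ 2 - d + 1 := by
    obtain ⟨r, rfl⟩ := Nat.exists_eq_add_of_le hed
    have hr : r ≤ r ^ 2 := Nat.le_self_pow two_ne_zero r
    rw [add_sq]
    omega
  refine combLT_mono F G hbound ?_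
  rcases hnot with hFe' | hGe'
  · exact mem_combLT_of_notMem_totDegLT hFe hFe' hGe hfin hg hA hi hi0
  · rw [combLT_comm]
    rw [Set.pair_comm] at hg hA
    have hfin' := hfin.subset fun _ hp => And.symm hp
    exact mem_combLT_of_notMem_totDegLT hGe hGe' hFe hfin' hg hA hi hi0

theorem Delta_le_two_gens_general {K : Type*} [Field K] {s : ℕ}
    (f : Fin 2 → Biv K) (d : ℕ) (htot : ∀ i, totDeg (f i) ≤ d)
    (hfin : {p : AlgebraicClosure K × AlgebraicClosure K |
      ∀ i, aEval p.1 p.2 (f i) = 0}.Finite)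
    (g : Fin (s + 1) → Biv K) (hg : IsReducedGB g (Ideal.span (Set.range f)))
    (A : ℕ → Biv K) (hA : IsDetachingSeq g (Ideal.span (Set.range f)) A)
    (i : ℕ) (hi : (g (Fin.last s)).natDegree ≤ i) (hi0 : i ≤ (g 0).natDegree) :
    ∃ w : Fin 2 → Biv K, (∀ j, totDeg (w j) ≤ 2 * d ^ 2 - d) ∧ A i = ∑ j, w j * f j := by
  have hrange : Set.range f = {f 0, f 1} := by
    ext
    simp [Fin.exists_fin_two, eq_comm]
  rw [hrange] at hg hA
  simp only [Fin.forall_fin_two] at hfin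
  have htot' (j : Fin 2) : f j ∈ totDegLT K (d + 1) := totDeg_le_iff_mem_totDegLT.1 (htot j)
  obtain ⟨u, hu, v, hv, huv⟩ := mem_combLT.1
    (mem_combLT_of_isDetachingSeq_span_pair (htot' 0) (htot' 1) hfin hg hA hi hi0)
  refine ⟨![u, v], Fin.forall_fin_two.2 ⟨totDeg_le_iff_mem_totDegLT.2 hu,
    totDeg_le_iff_mem_totDegLT.2 hv⟩, ?_⟩
  simpa [Fin.sum_univ_two] using huv

/-- if `F = (f_1, f_2)` have total degree at most `d ≥ 1` and generate an
ideal `I` with finitely many common zeros over an algebraic closure of `K`, then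
`Δ(F) ≤ 2 d′² + d′` with `d′ = max(d,3)`: every element `A i` (`n_s ≤ i ≤ n_0`) of the
detaching basis of `I` is a combination of `f_1, f_2` with cofactors of `y`-degree
`< 2 d′² + d′`. -/
theorem Delta_le_two_gens {K : Type*} [Field K] {s : ℕ}
    (f : Fin 2 → Biv K) (d : ℕ) (hd : 1 ≤ d)
    (htot : ∀ i, totDeg (f i) ≤ d)
    (hfin : {p : AlgebraicClosure K × AlgebraicClosure K |
      ∀ i, aEval p.1 p.2 (f i) = 0}.Finite)
    (I : Ideal (Biv K)) (hI : I = Ideal.span (Set.range f))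
    (g : Fin (s + 1) → Biv K) (hg : IsReducedGB g I)
    (A : ℕ → Biv K) (hA : IsDetachingSeq g I A) :
    ∀ i, (g (Fin.last s)).natDegree ≤ i → i ≤ (g 0).natDegree →
      ∃ w : Fin 2 → Biv K,
        (∀ j, (w j).degree < ((2 * (max d 3) ^ 2 + max d 3 : ℕ) : WithBot ℕ)) ∧
        A i = ∑ j, w j * f j := by
  subst hI
  intro i hi hi0
  obtain ⟨w, hw, hsum⟩ := Delta_le_two_gens_general f d htot hfin g hg A hA i hi hi0
  refine ⟨w, fun j => degree_lt_of_totDeg_lt ((hw j).trans_lt ?_), hsum⟩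
  have hsq : d ^ 2 ≤ max d 3 ^ 2 := Nat.pow_le_pow_left (le_max_left d 3) 2
  omega
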